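/- arXiv:1308.2656 — 5 statements merged into one kernel-verified Lean document; each statement's English description precedes it below -/
import Mathlib

section
/- Let n ∈ ℕ, let f : {0,1}^n → ℝ, and let 0 < p < r < 1. Then Var_r(E_{p/r}[f(ψ·ξ) | ψ]) ≤ (p/r)·((1−r)/(1−p))·Var_p(f). -/
/-!
The proof is by induction on `n`, splitting off one coordinate. Write `s = p / r`,
`ρ = s * ((1 - r) / (1 - p))`, `T f = condExp p r f`, and let `f₀`, `f₁` be the restrictions of `f`
to the two values of the first coordinate. Then `T f` restricts to `T f₀` and
`(1 - s) T f₀ + s T f₁`. Put `g = (1 - p) f₀ + p f₁` and `h = f₁ - f₀`. The law of total variance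
gives
`Var_r (T f) = Var_r (T g) + r (1 - r) s² E_r[(T h)²]` and
`Var_p f = Var_p g + p (1 - p) E_p[h²]`, where `r (1 - r) s² = ρ p (1 - p)`.
The induction hypothesis for `g` bounds the first terms. For the second terms it suffices that
`E_r[(T h)²] ≤ E_p[h²]`, which follows from the induction hypothesis for `h`, since `ρ ≤ 1` and
`E_r[T h] = E_p h` (`E_condExp`). The induction (`condExp_second_moment`) is phrased with second
moments minus squared means; `Var_eq` translates it back to variances.
-/

open Finset Filter

namespace PartialObs

/-- Weight of a configuration `ω ∈ {0,1}^n` under the product measure `ℙ_p`. -/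
noncomputable def w {n : ℕ} (p : ℝ) (ω : Fin n → Bool) : ℝ :=
  ∏ i, if ω i then p else 1 - p

/-- Expectation with respect to `ℙ_p`. -/
noncomputable def E {n : ℕ} (p : ℝ) (f : (Fin n → Bool) → ℝ) : ℝ :=
  ∑ ω : Fin n → Bool, w p ω * f ω

/-- Variance with respect to `ℙ_p`. -/
noncomputable def Var {n : ℕ} (p : ℝ) (f : (Fin n → Bool) → ℝ) : ℝ :=
  E p (fun ω => (f ω - E p f) ^ 2)

/-- Coordinatewise product `ψ·ξ` of two configurations. -/
def prodCfg {n : ℕ} (ψ ξ : Fin n → Bool) : Fin n → Bool := fun i => ψ i && ξ i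

/-- The conditional expectation `E_{p/r}[f(ψ·ξ) | ψ]`, as a function of `ψ`:
`ξ` is integrated out according to `ℙ_{p/r}`. -/
noncomputable def condExp {n : ℕ} (p r : ℝ) (f : (Fin n → Bool) → ℝ)
    (ψ : Fin n → Bool) : ℝ :=
  E (p / r) (fun ξ => f (prodCfg ψ ξ))

lemma E_succ {n : ℕ} (p : ℝ) (f : (Fin (n + 1) → Bool) → ℝ) :
    E p f = (1 - p) * E p (fun ω : Fin n → Bool => f (Fin.cons false ω))
      + p * E p (fun ω : Fin n → Bool => f (Fin.cons true ω)) := by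
  unfold E
  rw [← (Fin.consEquiv (fun _ => Bool)).sum_comp, Fintype.sum_prod_type]
  simp only [Fintype.sum_bool, Fin.consEquiv, Equiv.coe_fn_mk, w, Fin.prod_univ_succ,
    Fin.cons_zero, Fin.cons_succ, Finset.mul_sum]
  rw [add_comm]
  simp [mul_assoc]

lemma E_lin {n : ℕ} (p x y : ℝ) (a b : (Fin n → Bool) → ℝ) :
    E p (fun ω => x * a ω + y * b ω) = x * E p a + y * E p b := by
  simp only [E, Finset.mul_sum, ← Finset.sum_add_distrib]
  exact Finset.sum_congr rfl fun _ _ => by ring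

lemma E_one {n : ℕ} (p : ℝ) : E p (fun _ : Fin n → Bool => (1 : ℝ)) = 1 := by
  induction n with
  | zero => simp [E, w]
  | succ n ih => rw [E_succ, ih]; ring

lemma E_sq_lin {n : ℕ} (p x y : ℝ) (a b : (Fin n → Bool) → ℝ) :
    E p (fun ω => (x * a ω + y * b ω) ^ 2) =
      x ^ 2 * E p (fun ω => a ω ^ 2) + 2 * x * y * E p (fun ω => a ω * b ω)
        + y ^ 2 * E p (fun ω => b ω ^ 2) := by
  simp only [E, Finset.mul_sum, ← Finset.sum_add_distrib]
  exact Finset.sum_congr rfl fun _ _ => by ring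

lemma Var_eq {n : ℕ} (p : ℝ) (f : (Fin n → Bool) → ℝ) :
    Var p f = E p (fun ω => f ω ^ 2) - E p f ^ 2 := by
  have h := E_sq_lin p 1 (-E p f) f (fun _ => 1)
  simp only [one_pow, mul_one, one_mul, E_one] at h
  simp only [Var, sub_eq_add_neg]
  rw [h]
  ring

lemma condExp_lin {n : ℕ} (p r x y : ℝ) (a b : (Fin n → Bool) → ℝ) (ψ : Fin n → Bool) :
    condExp p r (fun ω => x * a ω + y * b ω) ψ = x * condExp p r a ψ + y * condExp p r b ψ :=
  E_lin _ _ _ _ _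

lemma prodCfg_cons {n : ℕ} (b c : Bool) (ψ ξ : Fin n → Bool) :
    prodCfg (Fin.cons b ψ : Fin (n + 1) → Bool) (Fin.cons c ξ) =
      Fin.cons (b && c) (prodCfg ψ ξ) := by
  funext i
  refine Fin.cases ?_ (fun j => ?_) i <;> simp [prodCfg]

lemma condExp_cons_false {n : ℕ} (p r : ℝ) (f : (Fin (n + 1) → Bool) → ℝ) (ψ : Fin n → Bool) :
    condExp p r f (Fin.cons false ψ) = condExp p r (fun ω => f (Fin.cons false ω)) ψ := by
  simp only [condExp]
  rw [E_succ]
  simp only [prodCfg_cons, Bool.false_and]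
  ring

lemma condExp_cons_true {n : ℕ} (p r : ℝ) (f : (Fin (n + 1) → Bool) → ℝ) (ψ : Fin n → Bool) :
    condExp p r f (Fin.cons true ψ) =
      (1 - p / r) * condExp p r (fun ω => f (Fin.cons false ω)) ψ
        + p / r * condExp p r (fun ω => f (Fin.cons true ω)) ψ := by
  simp only [condExp]
  rw [E_succ]
  simp only [prodCfg_cons, Bool.true_and]

/-- The tower property, reflecting that `ψ·ξ` has law `ℙ_p`. -/
lemma E_condExp {n : ℕ} (p r : ℝ) (hr : r ≠ 0) (f : (Fin n → Bool) → ℝ) :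
    E r (condExp p r f) = E p f := by
  induction n with
  | zero =>
    simp only [condExp, E, w, Finset.univ_unique, Finset.sum_singleton, Finset.univ_eq_empty,
      Finset.prod_empty, one_mul]
    exact congrArg f (Subsingleton.elim _ _)
  | succ n ih =>
    rw [E_succ, E_succ p]
    simp only [condExp_cons_false, condExp_cons_true]
    rw [E_lin]
    erw [ih, ih]
    field_simp
    ring

/-- The variance bound with both variances written as second moment minus squared mean, where
the mean of `condExp p r f` under `ℙ_r` is replaced by that of `f` under `ℙ_p`. -/
lemma condExp_second_moment {n : ℕ} (p r : ℝ) (hp : 0 < p) (hpr : p < r) (hr : r < 1)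
    (f : (Fin n → Bool) → ℝ) :
    E r (fun ψ => condExp p r f ψ ^ 2) - E p f ^ 2 ≤
      p / r * ((1 - r) / (1 - p)) * (E p (fun ω => f ω ^ 2) - E p f ^ 2) := by
  have hr0 : 0 < r := hp.trans hpr
  have hp1 : 0 < 1 - p := by linarith
  induction n with
  | zero =>
    obtain ⟨c, rfl⟩ : ∃ c, f = fun _ => c :=
      ⟨f default, funext fun ω => congrArg f (Subsingleton.elim _ _)⟩
    simp [condExp, E, w]
  | succ n ih =>
    set f₀ : (Fin n → Bool) → ℝ := fun ω => f (Fin.cons false ω) with hf₀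
    set f₁ : (Fin n → Bool) → ℝ := fun ω => f (Fin.cons true ω) with hf₁
    have hg := ih (fun ω => (1 - p) * f₀ ω + p * f₁ ω)
    have hh := ih (fun ω => (-1) * f₀ ω + 1 * f₁ ω)
    simp only [condExp_lin, E_sq_lin, E_lin] at hg hh
    rw [E_succ r, E_succ p f, E_succ p (fun ω => f ω ^ 2)]
    simp only [condExp_cons_false, condExp_cons_true, ← hf₀, ← hf₁, E_sq_lin]
    change (1 - r) * E r (fun ω => condExp p r f₀ ω ^ 2) + r * _ - _ ≤
      _ * ((1 - p) * E p (fun ω => f₀ ω ^ 2) + p * E p (fun ω => f₁ ω ^ 2) - _)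
    have hvar := Var_eq p (fun ω => (-1) * f₀ ω + 1 * f₁ ω)
    have hnn : 0 ≤ Var p (fun ω => (-1) * f₀ ω + 1 * f₁ ω) := by
      refine Finset.sum_nonneg fun ω _ => mul_nonneg (Finset.prod_nonneg fun i _ => ?_)
        (sq_nonneg _)
      split_ifs <;> linarith
    simp only [E_sq_lin, E_lin] at hvar
    rw [hvar] at hnn
    generalize E r (fun ω => condExp p r f₀ ω ^ 2) = A at *
    generalize E r (fun ω => condExp p r f₁ ω ^ 2) = B at *
    generalize E r (fun ω => condExp p r f₀ ω * condExp p r f₁ ω) = C at *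
    generalize E p (fun ω => f₀ ω ^ 2) = A₂ at *
    generalize E p (fun ω => f₁ ω ^ 2) = B₂ at *
    generalize E p (fun ω => f₀ ω * f₁ ω) = C₂ at *
    generalize E p f₀ = m₀ at *
    generalize E p f₁ = m₁ at *
    obtain ⟨ρ, hρ⟩ : ∃ ρ, ρ = p / r * ((1 - r) / (1 - p)) := ⟨_, rfl⟩
    obtain ⟨s, hs⟩ : ∃ s, s = p / r := ⟨_, rfl⟩
    rw [← hρ] at hg hh ⊢
    rw [← hs]
    have hsr : p = s * r := by rw [hs]; field_simp
    have hρ1 : ρ ≤ 1 := by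
      rw [hρ, div_mul_div_comm, div_le_one (by positivity)]
      nlinarith
    have hk : r * (1 - r) * s ^ 2 = ρ * (p * (1 - p)) := by
      rw [hρ, hs]; field_simp
    have hk0 : 0 ≤ r * (1 - r) * s ^ 2 :=
      mul_nonneg (mul_nonneg hr0.le (by linarith)) (sq_nonneg s)
    -- `E_r[(T h)²] ≤ E_p[h²]` for `h = f₁ - f₀`
    have hJ : A - 2 * C + B ≤ A₂ - 2 * C₂ + B₂ := by
      have := mul_le_of_le_one_left hnn hρ1
      linarith
    have hJk := mul_le_mul_of_nonneg_left hJ hk0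
    have e1 : (1 - r) * A + r * ((1 - s) ^ 2 * A + 2 * (1 - s) * s * C + s ^ 2 * B) =
        ((1 - p) ^ 2 * A + 2 * (1 - p) * p * C + p ^ 2 * B)
          + r * (1 - r) * s ^ 2 * (A - 2 * C + B) := by
      rw [hsr]; ring
    have e2 : ρ * ((1 - p) * A₂ + p * B₂ - ((1 - p) * m₀ + p * m₁) ^ 2) =
        ρ * ((1 - p) ^ 2 * A₂ + 2 * (1 - p) * p * C₂ + p ^ 2 * B₂
          - ((1 - p) * m₀ + p * m₁) ^ 2) + r * (1 - r) * s ^ 2 * (A₂ - 2 * C₂ + B₂) := by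
      rw [hk]; ring
    rw [e1, e2]
    linarith

/-- the two-scale variance upper bound
`Var_r(E_{p/r}[f(ψ·ξ) | ψ]) ≤ (p/r)·((1−r)/(1−p))·Var_p(f)`. -/
theorem two_scale_variance_upper_bound {n : ℕ} (f : (Fin n → Bool) → ℝ)
    (p r : ℝ) (hp : 0 < p) (hpr : p < r) (hr : r < 1) :
    Var r (condExp p r f) ≤ p / r * ((1 - r) / (1 - p)) * Var p f := by
  rw [Var_eq, Var_eq, E_condExp p r (hp.trans hpr).ne']
  exact condExp_second_moment p r hp hpr hr f

end PartialObs
end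

section
/- Let p ∈ (0,1) and let (f_n)_{n≥1} be a sequence of functions f_n : {0,1}^n → [0,1]. Then (f_n)_{n≥1} is noise sensitive at intensity p if and only if for every k ∈ ℕ, lim_{n→∞} Σ_{S ⊆ {1,…,n}, 0 < |S| ≤ k} f̂_n^p(S)² = 0. -/
/-!
The proof rests on the Mehler-type expansion of the joint law of `(ω, ω^ε)`: in one coordinate
the joint mass at `(a, b)` equals `q(a) q(b) (1 + (1 - ε) χ(a) χ(b))`, where `q` is the one-bit
marginal, and multiplying out over the coordinates gives
`pairW p ε a b = w p a * w p b * ∑ S, (1 - ε)^|S| χ_S(a) χ_S(b)` (`pairW_eq`).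
Hence `E[f(ω) f(ω^ε)] = ∑ S, (1 - ε)^|S| f̂(S)²` for every real `ε`, and removing the term of
`S = ∅` leaves `noiseCov p ε f = ∑_{S ≠ ∅} (1 - ε)^|S| f̂(S)²` (`noiseCov_eq`). The case `ε = 0`
is Parseval's identity, which bounds the total Fourier mass by `1` for `f` with values in `[0, 1]`
(`sum_fourier_sq_le_one`).

If `f` is noise sensitive, the choice `ε = 1/2` bounds the mass on levels `1, …, k` by
`2^k * noiseCov p (1/2) f`. Conversely, `noiseCov p ε f` is at most the mass on levels `1, …, k`
plus `(1 - ε)^k`, and `k` can be taken large before `n → ∞`.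
-/

open Finset Filter

namespace PartialObs

/-- The character `χ_S^p(ω) = ∏_{i ∈ S} χ_i^p(ω)`, where `χ_i^p(ω) = -√((1-p)/p)`
if `ω_i = 1` and `√(p/(1-p))` if `ω_i = 0`. -/
noncomputable def chi {n : ℕ} (p : ℝ) (S : Finset (Fin n)) (ω : Fin n → Bool) : ℝ :=
  ∏ i ∈ S, if ω i then -Real.sqrt ((1 - p) / p) else Real.sqrt (p / (1 - p))

/-- The Fourier coefficient `f̂^p(S) = E_p[f · χ_S^p]`. -/
noncomputable def fourier {n : ℕ} (p : ℝ) (f : (Fin n → Bool) → ℝ)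
    (S : Finset (Fin n)) : ℝ :=
  E p (fun ω => f ω * chi p S ω)

/-- Joint probability mass of the pair `(ω, ω^ε)` at `(a, b)`, where `ω ∼ ℙ_p` and
`ω^ε` is obtained from `ω` by independently resampling each coordinate with
probability `ε` (the resampled value being `1` with probability `p`). -/
noncomputable def pairW {n : ℕ} (p ε : ℝ) (a b : Fin n → Bool) : ℝ :=
  ∏ i, (if a i then p else 1 - p) *
    ((1 - ε) * (if a i = b i then 1 else 0) + ε * (if b i then p else 1 - p))

/-- Expectation `E_p[F(ω, ω^ε)]` over the joint law of `(ω, ω^ε)`. -/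
noncomputable def E2 {n : ℕ} (p ε : ℝ)
    (F : (Fin n → Bool) → (Fin n → Bool) → ℝ) : ℝ :=
  ∑ a : Fin n → Bool, ∑ b : Fin n → Bool, pairW p ε a b * F a b

/-- The quantity `E_p[f(ω) f(ω^ε)] − E_p[f(ω)]²`. -/
noncomputable def noiseCov {n : ℕ} (p ε : ℝ) (f : (Fin n → Bool) → ℝ) : ℝ :=
  E2 p ε (fun a b => f a * f b) - (E p f) ^ 2

/-- Noise sensitivity at intensity `p`: for every `ε ∈ (0,1)`,
`E_p[f_n(ω) f_n(ω^ε)] − E_p[f_n(ω)]² → 0` as `n → ∞`. -/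
def NS (p : ℝ) (f : ∀ n, (Fin n → Bool) → ℝ) : Prop :=
  ∀ ε ∈ Set.Ioo (0 : ℝ) 1,
    Tendsto (fun n => noiseCov p ε (f n)) atTop (nhds 0)

/-- Expansion of the joint mass of `(ω, ω^ε)` in the characters. No constraint on `ε` is needed,
so `ε = 0` is allowed and yields Parseval's identity. -/
theorem pairW_eq {n : ℕ} {p : ℝ} (hp : p ∈ Set.Ioo (0 : ℝ) 1) (ε : ℝ) (a b : Fin n → Bool) :
    pairW p ε a b =
      w p a * w p b * ∑ S : Finset (Fin n), (1 - ε) ^ S.card * (chi p S a * chi p S b) := by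
  obtain ⟨h0, h1⟩ := hp
  have h1' : 0 < 1 - p := by linarith
  have hs1 : √((1 - p) / p) * √((1 - p) / p) = (1 - p) / p :=
    Real.mul_self_sqrt (by positivity)
  have hs2 : √(p / (1 - p)) * √(p / (1 - p)) = p / (1 - p) :=
    Real.mul_self_sqrt (by positivity)
  have hs3 : √((1 - p) / p) * √(p / (1 - p)) = 1 := by
    rw [← Real.sqrt_mul (by positivity), div_mul_div_cancel₀ h0.ne', div_self h1'.ne',
      Real.sqrt_one]
  have hs4 : √(p / (1 - p)) * √((1 - p) / p) = 1 := by rw [mul_comm, hs3]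
  have hsum : ∑ S : Finset (Fin n), (1 - ε) ^ S.card * (chi p S a * chi p S b) =
      ∏ i, (1 + (1 - ε) *
        ((if a i then -√((1 - p) / p) else √(p / (1 - p))) *
          (if b i then -√((1 - p) / p) else √(p / (1 - p))))) := by
    rw [Finset.prod_one_add, Finset.powerset_univ]
    refine Finset.sum_congr rfl fun S _ => ?_
    simp only [chi, Finset.prod_mul_distrib, Finset.prod_const]
  rw [hsum]
  simp only [pairW, w, ← Finset.prod_mul_distrib]
  refine Finset.prod_congr rfl fun i _ => ?_
  rcases a i <;> rcases b i
  · simp only [Bool.false_eq_true, if_false, if_true, hs2]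
    field_simp
    ring
  · simp only [Bool.false_eq_true, if_false, if_true, mul_neg, hs4]
    ring
  · simp only [Bool.true_eq_false, Bool.false_eq_true, if_false, if_true, neg_mul, hs3]
    ring
  · simp only [if_true, neg_mul_neg, hs1]
    field_simp
    ring

theorem E2_eq {n : ℕ} {p : ℝ} (hp : p ∈ Set.Ioo (0 : ℝ) 1) (ε : ℝ) (f : (Fin n → Bool) → ℝ) :
    E2 p ε (fun a b => f a * f b) =
      ∑ S : Finset (Fin n), (1 - ε) ^ S.card * fourier p f S ^ 2 := by
  have h : ∀ S : Finset (Fin n), (1 - ε) ^ S.card * fourier p f S ^ 2 =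
      ∑ a, ∑ b, w p a * w p b * ((1 - ε) ^ S.card * (chi p S a * chi p S b)) * (f a * f b) := by
    intro S
    rw [sq, fourier, E, Finset.sum_mul_sum, Finset.mul_sum]
    refine Finset.sum_congr rfl fun a _ => ?_
    rw [Finset.mul_sum]
    refine Finset.sum_congr rfl fun b _ => ?_
    ring
  simp only [h]
  rw [Finset.sum_comm, E2]
  refine Finset.sum_congr rfl fun a _ => ?_
  rw [Finset.sum_comm]
  refine Finset.sum_congr rfl fun b _ => ?_
  rw [pairW_eq hp, Finset.mul_sum, Finset.sum_mul]

theorem noiseCov_eq {n : ℕ} {p : ℝ} (hp : p ∈ Set.Ioo (0 : ℝ) 1) (ε : ℝ)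
    (f : (Fin n → Bool) → ℝ) :
    noiseCov p ε f =
      ∑ S ∈ Finset.univ.filter (fun S : Finset (Fin n) => S ≠ ∅),
        (1 - ε) ^ S.card * fourier p f S ^ 2 := by
  have h0 : fourier p f ∅ = E p f := by simp [fourier, chi]
  rw [noiseCov, E2_eq hp, Finset.filter_ne', ← Finset.add_sum_erase _ _ (Finset.mem_univ ∅), h0]
  simp

theorem sum_w (n : ℕ) (p : ℝ) : ∑ ω : Fin n → Bool, w p ω = 1 := by
  have h := Finset.prod_univ_sum (fun _ : Fin n => (Finset.univ : Finset Bool))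
    (fun _ c => if c then p else 1 - p)
  rw [Fintype.piFinset_univ] at h
  simp only [w]
  rw [← h]
  simp

theorem w_nonneg {n : ℕ} {p : ℝ} (hp : p ∈ Set.Ioo (0 : ℝ) 1) (ω : Fin n → Bool) :
    0 ≤ w p ω := by
  refine Finset.prod_nonneg fun i _ => ?_
  split_ifs
  · exact hp.1.le
  · linarith [hp.2]

/-- Parseval's identity, read off from the case `ε = 0`, in which `ω^ε = ω`. -/
theorem sum_fourier_sq {n : ℕ} {p : ℝ} (hp : p ∈ Set.Ioo (0 : ℝ) 1) (f : (Fin n → Bool) → ℝ) :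
    ∑ S : Finset (Fin n), fourier p f S ^ 2 = E p (fun ω => f ω ^ 2) := by
  have h := E2_eq hp 0 f
  simp only [sub_zero, one_pow, one_mul] at h
  rw [← h, E2, E]
  refine Finset.sum_congr rfl fun a _ => ?_
  rw [Finset.sum_eq_single a]
  · simp [pairW, w, sq]
  · intro b _ hb
    obtain ⟨i, hi⟩ := Function.ne_iff.mp hb
    have hz : pairW p 0 a b = 0 :=
      Finset.prod_eq_zero (Finset.mem_univ i) (by simp [Ne.symm hi])
    rw [hz, zero_mul]
  · simp

theorem sum_fourier_sq_le_one {n : ℕ} {p : ℝ} (hp : p ∈ Set.Ioo (0 : ℝ) 1)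
    {f : (Fin n → Bool) → ℝ} (hf : ∀ ω, f ω ∈ Set.Icc (0 : ℝ) 1) :
    ∑ S : Finset (Fin n), fourier p f S ^ 2 ≤ 1 := by
  rw [sum_fourier_sq hp, ← sum_w n p]
  refine Finset.sum_le_sum fun ω _ => mul_le_of_le_one_right (w_nonneg hp ω) ?_
  exact pow_le_one₀ (hf ω).1 (hf ω).2

theorem noiseCov_nonneg {n : ℕ} {p ε : ℝ} (hp : p ∈ Set.Ioo (0 : ℝ) 1) (hε : ε ≤ 1)
    (f : (Fin n → Bool) → ℝ) : 0 ≤ noiseCov p ε f := by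
  rw [noiseCov_eq hp]
  have : 0 ≤ 1 - ε := by linarith
  exact Finset.sum_nonneg fun S _ => by positivity

theorem low_level_le {n : ℕ} {p : ℝ} (hp : p ∈ Set.Ioo (0 : ℝ) 1) (f : (Fin n → Bool) → ℝ)
    (k : ℕ) :
    ∑ S ∈ Finset.univ.filter (fun S : Finset (Fin n) => S ≠ ∅ ∧ S.card ≤ k), fourier p f S ^ 2 ≤
      2 ^ k * noiseCov p (1 / 2) f := by
  rw [noiseCov_eq hp, Finset.mul_sum, ← Finset.filter_filter]
  refine le_trans (Finset.sum_le_sum fun S hS => ?_)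
    (Finset.sum_le_sum_of_subset_of_nonneg (Finset.filter_subset _ _) fun S _ _ => ?_)
  · have hk : S.card ≤ k := (Finset.mem_filter.mp hS).2
    have h2 : (1 : ℝ) ≤ 2 ^ k * (1 - 1 / 2) ^ S.card := by
      have : (1 : ℝ) - 1 / 2 = 2⁻¹ := by norm_num
      rw [this, inv_pow, ← div_eq_mul_inv, one_le_div (by positivity)]
      exact pow_le_pow_right₀ (by norm_num) hk
    rw [← mul_assoc]
    exact le_mul_of_one_le_left (sq_nonneg _) h2
  · have : (0 : ℝ) ≤ 1 - 1 / 2 := by norm_num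
    positivity

theorem noiseCov_le {n : ℕ} {p ε : ℝ} (hp : p ∈ Set.Ioo (0 : ℝ) 1) (hε : ε ∈ Set.Ioo (0 : ℝ) 1)
    {f : (Fin n → Bool) → ℝ} (hf : ∀ ω, f ω ∈ Set.Icc (0 : ℝ) 1) (k : ℕ) :
    noiseCov p ε f ≤
      ∑ S ∈ Finset.univ.filter (fun S : Finset (Fin n) => S ≠ ∅ ∧ S.card ≤ k),
        fourier p f S ^ 2 + (1 - ε) ^ k := by
  have h0 : 0 ≤ 1 - ε := by linarith [hε.2]
  have h1 : 1 - ε ≤ 1 := by linarith [hε.1]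
  rw [noiseCov_eq hp, ← Finset.sum_filter_add_sum_filter_not _ (fun S => S.card ≤ k),
    Finset.filter_filter]
  refine add_le_add (Finset.sum_le_sum fun S _ => ?_) ?_
  · exact mul_le_of_le_one_left (sq_nonneg _) (pow_le_one₀ h0 h1)
  · calc _ ≤ ∑ S ∈ (Finset.univ.filter (fun S : Finset (Fin n) => S ≠ ∅)).filter
            (fun S => ¬ S.card ≤ k), (1 - ε) ^ k * fourier p f S ^ 2 := by
          refine Finset.sum_le_sum fun S hS => ?_
          have hk : k ≤ S.card := (not_le.mp (Finset.mem_filter.mp hS).2).le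
          exact mul_le_mul_of_nonneg_right (pow_le_pow_of_le_one h0 h1 hk) (sq_nonneg _)
      _ ≤ ∑ S : Finset (Fin n), (1 - ε) ^ k * fourier p f S ^ 2 :=
          Finset.sum_le_sum_of_subset_of_nonneg (Finset.subset_univ _)
            fun S _ _ => by positivity
      _ ≤ (1 - ε) ^ k := by
          rw [← Finset.mul_sum]
          exact mul_le_of_le_one_right (by positivity) (sum_fourier_sq_le_one hp hf)

/-- `(f_n)` is NS_p iff for every `k`, the Fourier mass on
non-empty sets of size at most `k` vanishes as `n → ∞`. -/
theorem NS_iff_low_level_fourier_vanishes (p : ℝ) (hp : p ∈ Set.Ioo (0 : ℝ) 1)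
    (f : ∀ n, (Fin n → Bool) → ℝ)
    (hf : ∀ n ω, f n ω ∈ Set.Icc (0 : ℝ) 1) :
    NS p f ↔ ∀ k : ℕ,
      Tendsto (fun n =>
        ∑ S ∈ Finset.univ.filter (fun S : Finset (Fin n) => S ≠ ∅ ∧ S.card ≤ k),
          fourier p (f n) S ^ 2) atTop (nhds 0) := by
  constructor
  · intro h k
    have hlim := (h (1 / 2) (by norm_num)).const_mul ((2 : ℝ) ^ k)
    rw [mul_zero] at hlim
    exact squeeze_zero (fun n => Finset.sum_nonneg fun S _ => sq_nonneg _)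
      (fun n => low_level_le hp (f n) k) hlim
  · intro h ε hε
    rw [Metric.tendsto_atTop]
    intro δ hδ
    obtain ⟨k, hk⟩ := exists_pow_lt_of_lt_one (half_pos hδ) (show 1 - ε < 1 by linarith [hε.1])
    obtain ⟨N, hN⟩ := eventually_atTop.mp ((h k).eventually_lt_const (half_pos hδ))
    refine ⟨N, fun n hn => ?_⟩
    rw [Real.dist_eq, sub_zero, abs_of_nonneg (noiseCov_nonneg hp hε.2.le (f n))]
    linarith [noiseCov_le hp hε (hf n) k, hN n hn]

end PartialObs
end

section
/- Let n ∈ ℕ, 0 < p < r < 1, f : {0,1}^n → ℝ, and define h_f : {0,1}^n → ℝ by h_f(ψ) := E_{p/r}[f(ψ·ξ) | ψ]. Then for every S ⊆ {1,…,n}, the Fourier coefficients satisfy ĥ_f^r(S) = ((p/r)·((1−r)/(1−p)))^{|S|/2} · f̂^p(S). -/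
/-!
Both sides are sums over configurations of products over coordinates, tested against `f`.
Grouping the pairs `(ψ, ξ)` by the value `ω = ψ·ξ`, the left side is `∑ ω, f ω * K ω` where
`K ω = E[χ_S^r(ψ) ; ψ·ξ = ω]`. The coordinates being independent, `K ω` factors
(`sum_fibre_eq_prod`), and the theorem reduces to a computation for a single coordinate
(`coord_mem` for `i ∈ S`, `coord_not_mem` for `i ∉ S`): passing from `ψ` to `ω` turns
`χ_i^r` into `√((p/r)·((1-r)/(1-p)))` times `χ_i^p`.
-/

open Finset Filter

namespace PartialObs

/-- The single-coordinate character `χ_i^p`, as a function of the value of `ω_i`. -/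
noncomputable def chi1 (p : ℝ) (b : Bool) : ℝ :=
  if b then -Real.sqrt ((1 - p) / p) else Real.sqrt (p / (1 - p))

/-- The Bernoulli(`p`) weight of a single coordinate. -/
noncomputable def w1 (p : ℝ) (b : Bool) : ℝ := if b then p else 1 - p

lemma w_eq_prod {n : ℕ} (p : ℝ) (ω : Fin n → Bool) : w p ω = ∏ i, w1 p (ω i) := rfl

lemma chi_eq_prod {n : ℕ} (p : ℝ) (S : Finset (Fin n)) (ω : Fin n → Bool) :
    chi p S ω = ∏ i, if i ∈ S then chi1 p (ω i) else 1 := by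
  rw [Fintype.prod_ite_mem]
  rfl

/-- One coordinate outside `S`: the product of a Bernoulli(`r`) and an independent
Bernoulli(`p/r`) variable is Bernoulli(`p`). -/
lemma coord_not_mem {p r : ℝ} (hr0 : 0 < r) (c : Bool) :
    ∑ a : Bool, ∑ b : Bool, (if (a && b) = c then w1 r a * w1 (p / r) b else 0) = w1 p c := by
  cases c <;> simp [w1] <;> field_simp
  ring

/-- One coordinate in `S`: the mean of `χ^r(a)` on the event `a && b = c` is a constant
multiple of `ℙ_p(c) χ^p(c)`. -/
lemma coord_mem {p r : ℝ} (hp : 0 < p) (hpr : p < r) (hr : r < 1) (c : Bool) :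
    ∑ a : Bool, ∑ b : Bool,
        (if (a && b) = c then w1 r a * w1 (p / r) b * chi1 r a else 0)
      = Real.sqrt (p / r * ((1 - r) / (1 - p))) * (w1 p c * chi1 p c) := by
  have hr0 : 0 < r := hp.trans hpr
  have hr1 : 0 < 1 - r := by linarith
  have hp1 : 0 < 1 - p := by linarith
  -- Everything is expressed through the square roots of `p`, `r`, `1 - p` and `1 - r`.
  have e1 := Real.sq_sqrt hp.le
  have e2 := Real.sq_sqrt hr0.le
  have e3 := Real.sq_sqrt hp1.le
  have e4 := Real.sq_sqrt hr1.le
  have p1 := Real.sqrt_pos.2 hp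
  have p2 := Real.sqrt_pos.2 hr0
  have p3 := Real.sqrt_pos.2 hp1
  have p4 := Real.sqrt_pos.2 hr1
  have hs : Real.sqrt (p / r * ((1 - r) / (1 - p)))
      = √p / √r * (√(1 - r) / √(1 - p)) := by
    rw [Real.sqrt_mul (by positivity), Real.sqrt_div hp.le, Real.sqrt_div hr1.le]
  rw [hs]
  simp only [chi1, w1]
  rw [Real.sqrt_div hr1.le, Real.sqrt_div hr0.le, Real.sqrt_div hp1.le, Real.sqrt_div hp.le]
  generalize √p = x at *
  generalize √r = y at *
  generalize √(1 - p) = z at *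
  generalize √(1 - r) = t at *
  rw [← e3, ← e4, ← e1, ← e2]
  cases c <;> simp <;> field_simp
  ring

/-- The mass that `(ψ, ξ)` puts on the fibre `ψ·ξ = ω`, for any weight of product form,
factors over the coordinates. -/
lemma sum_fibre_eq_prod {n : ℕ} (G : Fin n → Bool → Bool → ℝ) (ω : Fin n → Bool) :
    ∑ ψ : Fin n → Bool, ∑ ξ : Fin n → Bool,
        (if prodCfg ψ ξ = ω then ∏ i, G i (ψ i) (ξ i) else 0)
      = ∏ i, ∑ a : Bool, ∑ b : Bool, (if (a && b) = ω i then G i a b else 0) := by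
  rw [Fintype.prod_sum]
  refine Finset.sum_congr rfl fun ψ _ => ?_
  rw [Fintype.prod_sum]
  refine Finset.sum_congr rfl fun ξ _ => ?_
  rw [Finset.prod_ite_zero]
  simp only [funext_iff, prodCfg, Finset.mem_univ, true_implies]

/-- The kernel `K ω = E[χ_S^r(ψ) ; ψ·ξ = ω]` is a multiple of `ℙ_p(ω) χ_S^p(ω)`. -/
lemma kernel_eq {n : ℕ} {p r : ℝ} (hp : 0 < p) (hpr : p < r) (hr : r < 1)
    (S : Finset (Fin n)) (ω : Fin n → Bool) :
    ∑ ψ : Fin n → Bool, ∑ ξ : Fin n → Bool,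
        (if prodCfg ψ ξ = ω then w r ψ * w (p / r) ξ * chi r S ψ else 0)
      = (p / r * ((1 - r) / (1 - p))) ^ ((S.card : ℝ) / 2) * (w p ω * chi p S ω) := by
  have hr0 : 0 < r := hp.trans hpr
  have hc : 0 ≤ p / r * ((1 - r) / (1 - p)) := by
    have hr1 : 0 < 1 - r := by linarith
    have hp1 : 0 < 1 - p := by linarith
    positivity
  have hpow : (p / r * ((1 - r) / (1 - p))) ^ ((S.card : ℝ) / 2)
      = ∏ i : Fin n, if i ∈ S then Real.sqrt (p / r * ((1 - r) / (1 - p))) else 1 := by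
    rw [Fintype.prod_ite_mem, Finset.prod_const, Real.sqrt_eq_rpow, ← Real.rpow_mul_natCast hc]
    ring_nf
  simp only [hpow, w_eq_prod, chi_eq_prod, ← Finset.prod_mul_distrib]
  rw [sum_fibre_eq_prod
    (fun i a b => w1 r a * w1 (p / r) b * if i ∈ S then chi1 r a else 1) ω]
  refine Finset.prod_congr rfl fun i _ => ?_
  by_cases hi : i ∈ S
  · simp only [hi, if_true]
    exact coord_mem hp hpr hr (ω i)
  · simp only [hi, if_false, mul_one, one_mul]
    exact coord_not_mem hr0 (ω i)

/-- for `h_f(ψ) := E_{p/r}[f(ψ·ξ) | ψ]`,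
`ĥ_f^r(S) = ((p/r)·((1−r)/(1−p)))^{|S|/2} · f̂^p(S)`. -/
theorem fourier_coefficient_condExp {n : ℕ} (p r : ℝ)
    (hp : 0 < p) (hpr : p < r) (hr : r < 1)
    (f : (Fin n → Bool) → ℝ) (S : Finset (Fin n)) :
    fourier r (condExp p r f) S
      = (p / r * ((1 - r) / (1 - p))) ^ ((S.card : ℝ) / 2) * fourier p f S := by
  calc fourier r (condExp p r f) S
      = ∑ ψ : Fin n → Bool, ∑ ξ : Fin n → Bool, ∑ ω : Fin n → Bool,
          f ω * (if prodCfg ψ ξ = ω then w r ψ * w (p / r) ξ * chi r S ψ else 0) := by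
        simp only [fourier, condExp, E, mul_ite, mul_zero, Finset.sum_ite_eq,
          Finset.mem_univ, if_true, Finset.sum_mul, Finset.mul_sum]
        refine Finset.sum_congr rfl fun ψ _ => Finset.sum_congr rfl fun ξ _ => ?_
        ring
    _ = ∑ ω : Fin n → Bool, f ω * ∑ ψ : Fin n → Bool, ∑ ξ : Fin n → Bool,
          (if prodCfg ψ ξ = ω then w r ψ * w (p / r) ξ * chi r S ψ else 0) := by
        simp only [Finset.mul_sum]
        symm
        rw [Finset.sum_comm]
        exact Finset.sum_congr rfl fun ψ _ => Finset.sum_comm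
    _ = (p / r * ((1 - r) / (1 - p))) ^ ((S.card : ℝ) / 2) * fourier p f S := by
        simp only [kernel_eq hp hpr hr, fourier, E, Finset.mul_sum]
        refine Finset.sum_congr rfl fun ω _ => ?_
        ring

end PartialObs
end

section
/- Let n ∈ ℕ, p ∈ (0,1), ε ∈ (0,1), and set r = p/(1 − ε(1−p)). Let ψ ∈ {0,1}^n be distributed according to ℙ_r, and let ξ and ξ' be independent, each distributed according to ℙ_{p/r} and independent of ψ. Then the pair (ψ·ξ, ψ·ξ') has the same joint distribution as (ω, ω^ε), where ω is distributed according to ℙ_p and ω^ε is its ε-noised version. -/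
/-!
Both joint laws are products over the coordinates, so the identity reduces to one coordinate.
There, with `q = p / r = 1 - ε (1 - p)`, both sides give mass `r q² = p q` to `(1,1)`,
`r q (1 - q) = p ε (1 - p)` to `(1,0)` and to `(0,1)`, and the remaining mass to `(0,0)`
(`coord_law`). The sum over triples `(ψ, ξ, ξ')` factorizes over coordinates because a sum over
functions of a product is a product of sums (`sum_triple_prod`).
-/

open Finset Filter

namespace PartialObs

/-- Fubini for finite products: a sum over triples of configurations of a coordinatewise product
is the product over coordinates of the one-coordinate sums. -/
theorem sum_triple_prod {n : ℕ} (g : Fin n → Bool → Bool → Bool → ℝ) :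
    (∑ ψ : Fin n → Bool, ∑ ξ : Fin n → Bool, ∑ ξ' : Fin n → Bool,
      ∏ i, g i (ψ i) (ξ i) (ξ' i)) = ∏ i, ∑ x, ∑ y, ∑ z, g i x y z := by
  simp only [Fintype.prod_sum]

/-- The case of a single coordinate, with `q` in the role of `p / r`. -/
theorem coord_law (p ε r q : ℝ) (hq : q = 1 - ε * (1 - p)) (hrq : r * q = p) (s t : Bool) :
    (∑ x : Bool, ∑ y : Bool, ∑ z : Bool,
      (if x then r else 1 - r) * (if y then q else 1 - q) * (if z then q else 1 - q) *
        (if (x && y) = s ∧ (x && z) = t then (1 : ℝ) else 0))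
      = (if s then p else 1 - p) *
        ((1 - ε) * (if s = t then 1 else 0) + ε * (if t then p else 1 - p)) := by
  -- Every mass is a polynomial in `p` and `ε` once `r * q` is replaced by `p`.
  cases s <;> cases t <;> simp
  · linear_combination (q - 2) * hrq + p * hq
  · linear_combination (1 - q) * hrq - p * hq
  · linear_combination (1 - q) * hrq - p * hq
  · linear_combination q * hrq + p * hq

/-- with `r = p/(1 − ε(1−p))`, the pair `(ψ·ξ, ψ·ξ')` (with
`ψ ∼ ℙ_r` and `ξ, ξ' ∼ ℙ_{p/r}` independent) has the same joint distribution
as `(ω, ω^ε)` with `ω ∼ ℙ_p`: the two joint probability mass functions agree. -/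
theorem joint_law_prod_eq_noise {n : ℕ} (p ε : ℝ)
    (hp : p ∈ Set.Ioo (0 : ℝ) 1) (hε : ε ∈ Set.Ioo (0 : ℝ) 1)
    (r : ℝ) (hr : r = p / (1 - ε * (1 - p)))
    (a b : Fin n → Bool) :
    (∑ ψ : Fin n → Bool, ∑ ξ : Fin n → Bool, ∑ ξ' : Fin n → Bool,
      w r ψ * w (p / r) ξ * w (p / r) ξ' *
        (if prodCfg ψ ξ = a ∧ prodCfg ψ ξ' = b then (1 : ℝ) else 0))
      = pairW p ε a b := by
  have hq0 : 0 < 1 - ε * (1 - p) := by nlinarith [hp.1, hp.2, hε.1, hε.2]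
  have hq : p / r = 1 - ε * (1 - p) := by
    rw [hr, div_div_cancel₀ hp.1.ne']
  have hrq : r * (p / r) = p := by
    rw [hq, hr, div_mul_cancel₀ _ (ne_of_gt hq0)]
  -- The indicator of an equality of configurations is the product of its coordinate indicators.
  have hind : ∀ ψ ξ ξ' : Fin n → Bool,
      (if prodCfg ψ ξ = a ∧ prodCfg ψ ξ' = b then (1 : ℝ) else 0)
        = ∏ i, if (ψ i && ξ i) = a i ∧ (ψ i && ξ' i) = b i then (1 : ℝ) else 0 := by
    intro ψ ξ ξ'
    simp [Finset.prod_ite_zero, prodCfg, funext_iff, forall_and]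
  simp only [hind, w, pairW, ← Finset.prod_mul_distrib]
  rw [sum_triple_prod (fun i x y z =>
    (if x then r else 1 - r) * (if y then p / r else 1 - p / r) *
      (if z then p / r else 1 - p / r) *
      (if (x && y) = a i ∧ (x && z) = b i then (1 : ℝ) else 0))]
  exact Finset.prod_congr rfl fun i _ => coord_law p ε r (p / r) hq hrq (a i) (b i)

end PartialObs
end

section
/- Let n ∈ ℕ, p ∈ (0,1), ε ∈ (0,1), and set r = p/(1 − ε(1−p)). Then for every f : {0,1}^n → ℝ, E_p[f(ω) f(ω^ε)] = E_r[(E_{p/r}[f(ψ·ξ) | ψ])²]. -/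
/-!
Expanding the square, the right-hand side is `E[f(ψ·ξ) f(ψ·η)]` with `ξ, η` two independent
copies given `ψ`, so it suffices that `(ψ·ξ, ψ·η)` has the law of `(ω, ω^ε)`. Both laws are
products over the coordinates, and in one coordinate this is a check of four entries, with
`p / r = 1 - ε (1 - p)`: for instance, both values are `1` with probability
`r (p / r)² = p (1 - ε (1 - p))`. `pairW_eq_sum` is the identity of laws, and `condExp_eq_sum`
writes the conditional expectation through the thinning kernel `thinK`.
-/

open Finset Filter

namespace PartialObs

/-- Transition probability from `ψ` to `ψ·ξ = a` with `ξ ∼ ℙ_s`, in product form: a coordinate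
with `ψ i = 0` stays `0`, a coordinate with `ψ i = 1` is kept with probability `s`. -/
noncomputable def thinK {n : ℕ} (s : ℝ) (ψ a : Fin n → Bool) : ℝ :=
  ∏ i, if ψ i then (if a i then s else 1 - s) else (if a i then 0 else 1)

lemma sum_w_indicator {n : ℕ} (s : ℝ) (ψ a : Fin n → Bool) :
    ∑ ξ : Fin n → Bool, w s ξ * (if prodCfg ψ ξ = a then 1 else 0) = thinK s ψ a := by
  have h : ∀ ξ : Fin n → Bool, w s ξ * (if prodCfg ψ ξ = a then 1 else 0) =
      ∏ i, ((if ξ i then s else 1 - s) * if (ψ i && ξ i) = a i then 1 else 0) := by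
    intro ξ
    rw [Finset.prod_mul_distrib, Finset.prod_ite_zero, Finset.prod_const_one]
    simp only [w, funext_iff, prodCfg, Finset.mem_univ, true_imp_iff]
  simp_rw [h]
  rw [← Fintype.prod_sum
    (fun i (x : Bool) => (if x then s else 1 - s) * if (ψ i && x) = a i then (1 : ℝ) else 0)]
  refine Finset.prod_congr rfl fun i _ => ?_
  cases ψ i <;> cases a i <;> simp

lemma condExp_eq_sum {n : ℕ} (p r : ℝ) (f : (Fin n → Bool) → ℝ) (ψ : Fin n → Bool) :
    condExp p r f ψ = ∑ a, thinK (p / r) ψ a * f a := by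
  simp_rw [← sum_w_indicator, Finset.sum_mul]
  rw [Finset.sum_comm]
  simp [condExp, E]

/-- The pair `(ω, ω^ε)` has the law of two thinnings of a common `ψ ∼ ℙ_r` that are conditionally
independent given `ψ`. -/
lemma pairW_eq_sum {n : ℕ} (p ε r : ℝ) (hp : p ∈ Set.Ioo (0 : ℝ) 1)
    (hε : ε ∈ Set.Ioo (0 : ℝ) 1) (hr : r = p / (1 - ε * (1 - p))) (a b : Fin n → Bool) :
    pairW p ε a b = ∑ ψ, w r ψ * (thinK (p / r) ψ a * thinK (p / r) ψ b) := by
  obtain ⟨hp0, hp1⟩ := hp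
  obtain ⟨hε0, hε1⟩ := hε
  have hs0 : 1 - ε * (1 - p) ≠ 0 := by nlinarith
  have hs : p / r = 1 - ε * (1 - p) := by
    rw [hr]
    field_simp
  have hrs : r * (1 - ε * (1 - p)) = p := by
    rw [hr]
    field_simp
  rw [hs]
  simp only [w, thinK, ← Finset.prod_mul_distrib]
  rw [← Fintype.prod_sum (fun i (x : Bool) => (if x then r else 1 - r) *
    ((if x then (if a i then 1 - ε * (1 - p) else 1 - (1 - ε * (1 - p)))
        else (if a i then 0 else 1)) *
      (if x then (if b i then 1 - ε * (1 - p) else 1 - (1 - ε * (1 - p)))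
        else (if b i then 0 else 1))))]
  refine Finset.prod_congr rfl fun i _ => ?_
  cases a i <;> cases b i <;>
    simp only [Fintype.sum_bool, if_true, if_false, Bool.false_eq_true, reduceCtorEq]
  · linear_combination (1 + ε * (1 - p)) * hrs
  · linear_combination -(ε * (1 - p)) * hrs
  · linear_combination -(ε * (1 - p)) * hrs
  · linear_combination -(1 - ε * (1 - p)) * hrs

/-- with `r = p/(1 − ε(1−p))`,
`E_p[f(ω) f(ω^ε)] = E_r[(E_{p/r}[f(ψ·ξ) | ψ])²]`. -/
theorem noise_correlation_eq_second_moment {n : ℕ} (p ε : ℝ)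
    (hp : p ∈ Set.Ioo (0 : ℝ) 1) (hε : ε ∈ Set.Ioo (0 : ℝ) 1)
    (r : ℝ) (hr : r = p / (1 - ε * (1 - p)))
    (f : (Fin n → Bool) → ℝ) :
    E2 p ε (fun a b => f a * f b) = E r (fun ψ => (condExp p r f ψ) ^ 2) := by
  calc E2 p ε (fun a b => f a * f b)
      = ∑ a, ∑ b, ∑ ψ, w r ψ * ((thinK (p / r) ψ a * f a) * (thinK (p / r) ψ b * f b)) := by
        refine Finset.sum_congr rfl fun a _ => Finset.sum_congr rfl fun b _ => ?_
        rw [pairW_eq_sum p ε r hp hε hr, Finset.sum_mul]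
        exact Finset.sum_congr rfl fun ψ _ => by ring
    _ = ∑ ψ, ∑ a, ∑ b, w r ψ * ((thinK (p / r) ψ a * f a) * (thinK (p / r) ψ b * f b)) := by
        symm
        rw [Finset.sum_comm]
        exact Finset.sum_congr rfl fun a _ => Finset.sum_comm
    _ = E r (fun ψ => (condExp p r f ψ) ^ 2) := by
        refine Finset.sum_congr rfl fun ψ _ => ?_
        beta_reduce
        rw [condExp_eq_sum, sq, Finset.sum_mul_sum]
        simp_rw [Finset.mul_sum]

end PartialObs
end
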